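/- For every tree T of order n with maximum degree Δ(T) ≥ 3, the strict inequality σ_t(T) < (n − 2) · σ(T) holds. -/

import Mathlib

open Finset
open scoped Classical

noncomputable section

variable {V : Type*}

/-- Albertson irregularity: `∑_{uv ∈ E} |d(u) - d(v)|` (as an integer). -/
def irr [Fintype V] (G : SimpleGraph V) : ℤ :=
  ∑ e ∈ G.edgeFinset,
    Sym2.lift ⟨fun u v => |(G.degree u : ℤ) - (G.degree v : ℤ)|,
      fun u v => by simp only []; rw [abs_sub_comm]⟩ e

/-- `σ(G) = ∑_{uv ∈ E} (d(u) - d(v))²`. -/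
def sigmaE [Fintype V] (G : SimpleGraph V) : ℤ :=
  ∑ e ∈ G.edgeFinset,
    Sym2.lift ⟨fun u v => ((G.degree u : ℤ) - (G.degree v : ℤ)) ^ 2,
      fun u v => by simp only []; ring⟩ e

/-- `σ_t(G) = ∑_{{u,v} ⊆ V, u ≠ v} (d(u) - d(v))²`, over unordered pairs of distinct vertices. -/
def sigmaT [Fintype V] (G : SimpleGraph V) : ℤ :=
  ∑ p ∈ (Finset.univ : Finset V).sym2.filter (fun p => ¬ p.IsDiag),
    Sym2.lift ⟨fun u v => ((G.degree u : ℤ) - (G.degree v : ℤ)) ^ 2,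
      fun u v => by simp only []; ring⟩ p

/-- Degree variance `Var(G) = (1/n) ∑_v (d(v) - 2m/n)²`. -/
def degVar [Fintype V] (G : SimpleGraph V) : ℝ :=
  (∑ v : V, ((G.degree v : ℝ) - 2 * (G.edgeFinset.card : ℝ) / (Fintype.card V : ℝ)) ^ 2) /
    (Fintype.card V : ℝ)

end

/-
Write `n` for the order of the tree `G`, `d` for its degree function and fix a vertex `r`.
Rooting `G` at `r` matches the edges with the vertices other than `r`, each edge going to its
endpoint farther from `r`, so `∑_{uv ∈ E} min (d u) (d v) ≤ ∑_{v ≠ r} d v = 2 (n - 1) - d r`. Since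
`|a - b| = a + b - 2 min a b`, this bounds `irr G` from below by `∑_v d(v)² - 4 (n - 1) + 2 d r`,
and, because `σ_t(G) = n ∑_v d(v)² - (2 (n - 1))²`, the bound rearranges to
`σ_t(G) + 2 ∑_v (d v - 1) (d r - d v) ≤ (n - 2) irr G`.
Choose `r` of maximum degree: the correction sum is then nonnegative, and `irr G ≤ σ(G)` gives the
weak inequality. For strictness, a walk from a leaf to `r` crosses an edge `uv` with
`d u = 1 < d v`: if `d v < d r` the correction sum is positive, and if `d v = d r ≥ 3` then
`|d u - d v| < (d u - d v)²`, so `irr G < σ(G)`.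
-/

section EdgeSums

variable {V M : Type*} [Fintype V] [AddCommMonoid M] (G : SimpleGraph V)
  [Fintype G.edgeSet] [G.LocallyFinite]

lemma two_nsmul_sum_edgeFinset (F : Sym2 V → M) :
    2 • ∑ e ∈ G.edgeFinset, F e = ∑ u, ∑ v ∈ G.neighborFinset u, F s(u, v) := by
  have fiber (e : Sym2 V) (he : e ∈ G.edgeFinset) :
      ∑ d : G.Dart with d.edge = e, F d.edge = 2 • F e := by
    rw [sum_congr rfl fun d hd ↦ congrArg F (mem_filter.1 hd).2, sum_const,
      G.dart_edge_fiber_card e (SimpleGraph.mem_edgeFinset.1 he)]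
  calc
    2 • ∑ e ∈ G.edgeFinset, F e
      = ∑ e ∈ G.edgeFinset, ∑ d : G.Dart with d.edge = e, F d.edge := by
        rw [← sum_nsmul]
        exact sum_congr rfl fun e he ↦ (fiber e he).symm
    _ = ∑ d : G.Dart, F d.edge :=
        sum_fiberwise_of_maps_to (fun d _ ↦ SimpleGraph.mem_edgeFinset.2 d.edge_mem) _
    _ = ∑ u, ∑ v ∈ G.neighborFinset u, F s(u, v) := by
        rw [sum_sigma']
        exact sum_bij' (fun d _ ↦ ⟨d.fst, d.snd⟩)
          (fun x hx ↦ ⟨(x.1, x.2), by simpa using hx⟩) (by simp [SimpleGraph.Dart.adj]) (by simp)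
          (by simp) (by simp) (by simp [SimpleGraph.Dart.edge])

lemma sum_edgeFinset_sum_toFinset (f : V → M) :
    ∑ e ∈ G.edgeFinset, ∑ v ∈ e.toFinset, f v = ∑ v, G.degree v • f v := by
  calc
    ∑ e ∈ G.edgeFinset, ∑ v ∈ e.toFinset, f v = ∑ v, ∑ _e ∈ G.incidenceFinset v, f v :=
        sum_comm' fun e v ↦ by simp [SimpleGraph.incidenceFinset_eq_filter]
    _ = ∑ v, G.degree v • f v := by
        simp only [sum_const, SimpleGraph.card_incidenceFinset_eq_degree]

end EdgeSums

section Trees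

variable {V : Type*} {G : SimpleGraph V}

lemma exists_adj_dist_lt_of_reachable {r v : V} (h : G.Reachable v r) (hv : v ≠ r) :
    ∃ w, G.Adj v w ∧ G.dist w r < G.dist v r := by
  obtain ⟨p, hp⟩ := h.exists_walk_length_eq_dist
  cases p with
  | nil => exact absurd rfl hv
  | cons hadj q =>
    rw [SimpleGraph.Walk.length_cons] at hp
    exact ⟨_, hadj, by have := SimpleGraph.dist_le q; omega⟩

lemma exists_parent_bijOn_edgeSet_of_isTree [Finite V] (hT : G.IsTree) (r : V) :
    ∃ parent : V → V, Set.BijOn (fun v ↦ s(v, parent v)) {r}ᶜ G.edgeSet := by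
  have := Fintype.ofFinite V
  choose! parent hadj hdist using
    fun v (hv : v ≠ r) ↦ exists_adj_dist_lt_of_reachable (hT.connected v r) hv
  have hmaps : Set.MapsTo (fun v ↦ s(v, parent v)) {r}ᶜ G.edgeSet := fun v hv ↦ hadj v hv
  have hinj : Set.InjOn (fun v ↦ s(v, parent v)) {r}ᶜ := by
    intro v hv w hw hvw
    rcases Sym2.eq_iff.1 hvw with ⟨h, -⟩ | ⟨hv_parent, hw_parent⟩
    · exact h
    · have hlt := hdist v hv
      have hgt := hdist w hw
      rw [hw_parent] at hlt
      rw [← hv_parent] at hgt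
      exact absurd hlt hgt.asymm
  refine ⟨parent, hmaps, hinj, ?_⟩
  have hcard : #G.edgeFinset ≤ #({r}ᶜ : Finset V) := by
    have := hT.card_edgeFinset
    rw [card_compl, card_singleton]
    omega
  simpa using surjOn_of_injOn_of_card_le (s := {r}ᶜ) (t := G.edgeFinset) _
    (by simpa using hmaps) (by simpa using hinj) hcard

lemma sum_edgeFinset_inf_add_le_sum_of_isTree {M : Type*} [Fintype V] [AddCommMonoid M]
    [SemilatticeInf M] [IsOrderedAddMonoid M] (hT : G.IsTree) (f : V → M) (r : V) :
    ∑ e ∈ G.edgeFinset, (e.map f).inf + f r ≤ ∑ v, f v := by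
  obtain ⟨parent, hbij⟩ := exists_parent_bijOn_edgeSet_of_isTree hT r
  calc
    ∑ e ∈ G.edgeFinset, (e.map f).inf + f r
      = ∑ v ∈ {r}ᶜ, f v ⊓ f (parent v) + f r := by
        congr 1
        exact (sum_nbij (fun v ↦ s(v, parent v))
          (fun v hv ↦ SimpleGraph.mem_edgeFinset.2 (hbij.mapsTo (by simpa using hv)))
          (by simpa using hbij.injOn) (by simpa using hbij.surjOn) fun v _ ↦ rfl).symm
    _ ≤ ∑ v ∈ {r}ᶜ, f v + f r := by
        gcongr
        exact inf_le_left
    _ = ∑ v, f v := by rw [← sum_compl_add_sum {r} f, sum_singleton]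

end Trees

section Irregularity

variable {V : Type*} [Fintype V] {G : SimpleGraph V}

lemma sigmaT_eq_card_mul_sum_sq_sub_sq_sum (G : SimpleGraph V) :
    sigmaT G = Fintype.card V * ∑ v, (G.degree v : ℤ) ^ 2 - (∑ v, (G.degree v : ℤ)) ^ 2 := by
  have hpairs : (univ : Finset V).sym2.filter (fun p ↦ ¬ p.IsDiag) =
      (⊤ : SimpleGraph V).edgeFinset := by
    ext p
    simp
  have hdouble : 2 * sigmaT G = ∑ u, ∑ v, ((G.degree u : ℤ) - G.degree v) ^ 2 := by
    rw [sigmaT, hpairs, two_mul, ← two_nsmul, two_nsmul_sum_edgeFinset]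
    refine sum_congr rfl fun u _ ↦ sum_subset (subset_univ _) fun v _ hv ↦ ?_
    obtain rfl : v = u := by simpa using hv
    simp
  have hexpand : ∑ u, ∑ v, ((G.degree u : ℤ) - G.degree v) ^ 2 =
      2 * (Fintype.card V * ∑ v, (G.degree v : ℤ) ^ 2 - (∑ v, (G.degree v : ℤ)) ^ 2) := by
    simp only [sub_sq, sum_add_distrib, sum_sub_distrib, ← mul_sum, ← sum_mul, sum_const,
      card_univ, nsmul_eq_mul]
    ring
  linarith

lemma irr_eq_sum_sq_sub_two_mul_sum_inf (G : SimpleGraph V) :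
    irr G = ∑ v, (G.degree v : ℤ) ^ 2 -
      2 * ∑ e ∈ G.edgeFinset, (e.map fun v ↦ (G.degree v : ℤ)).inf := by
  have hsq : ∑ v, (G.degree v : ℤ) ^ 2 =
      ∑ e ∈ G.edgeFinset, ∑ v ∈ e.toFinset, (G.degree v : ℤ) := by
    simp only [sum_edgeFinset_sum_toFinset, nsmul_eq_mul, sq]
  rw [hsq, mul_sum, ← sum_sub_distrib, irr]
  refine sum_congr rfl fun e he ↦ ?_
  induction e with
  | _ u v =>
    have hne : u ≠ v := G.ne_of_adj (SimpleGraph.mem_edgeFinset.1 he)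
    have habs := two_nsmul_inf_eq_add_sub_abs_sub (G.degree u : ℤ) (G.degree v)
    rw [nsmul_eq_mul, Nat.cast_ofNat, abs_sub_comm] at habs
    rw [Sym2.toFinset_mk_eq, sum_pair hne, Sym2.map_mk, Sym2.inf_mk, habs, Sym2.lift_mk]
    ring

lemma irr_le_sigmaE (G : SimpleGraph V) : irr G ≤ sigmaE G := by
  refine sum_le_sum fun e _ ↦ ?_
  induction e with
  | _ u v =>
    simpa only [Sym2.lift_mk, sq_abs] using Int.le_self_sq |(G.degree u : ℤ) - G.degree v|

lemma irr_lt_sigmaE_of_adj {u v : V} (huv : G.Adj u v) (hdeg : G.degree u + 2 ≤ G.degree v) :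
    irr G < sigmaE G := by
  refine sum_lt_sum (fun e _ ↦ ?_) ⟨s(u, v), SimpleGraph.mem_edgeFinset.2 huv, ?_⟩
  · induction e with
    | _ a b =>
      simpa only [Sym2.lift_mk, sq_abs] using Int.le_self_sq |(G.degree a : ℤ) - G.degree b|
  · have hgap : 1 < |(G.degree u : ℤ) - G.degree v| := by
      rw [lt_abs]
      omega
    simpa only [Sym2.lift_mk, sq_abs] using lt_self_pow₀ hgap one_lt_two

lemma sum_degree_eq_of_isTree (hT : G.IsTree) :
    ∑ v, (G.degree v : ℤ) = 2 * (Fintype.card V - 1) := by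
  have hcard := hT.card_edgeFinset
  have hsum := G.sum_degrees_eq_twice_card_edges
  zify at hcard hsum
  linarith

lemma sum_sq_degree_add_le_irr_of_isTree (hT : G.IsTree) (r : V) :
    ∑ v, (G.degree v : ℤ) ^ 2 + 2 * G.degree r ≤ irr G + 4 * (Fintype.card V - 1) := by
  have hinf := sum_edgeFinset_inf_add_le_sum_of_isTree hT (fun v ↦ (G.degree v : ℤ)) r
  rw [sum_degree_eq_of_isTree hT] at hinf
  rw [irr_eq_sum_sq_sub_two_mul_sum_inf]
  linarith

lemma sigmaT_add_le_mul_irr_of_isTree [Nontrivial V] (hT : G.IsTree) (r : V) :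
    sigmaT G + 2 * ∑ v, ((G.degree v : ℤ) - 1) * (G.degree r - G.degree v) ≤
      (Fintype.card V - 2) * irr G := by
  have hsum := sum_degree_eq_of_isTree hT
  have hcorrection : ∑ v, ((G.degree v : ℤ) - 1) * (G.degree r - G.degree v) =
      (G.degree r + 1) * ∑ v, (G.degree v : ℤ) - ∑ v, (G.degree v : ℤ) ^ 2 -
        Fintype.card V * G.degree r := by
    rw [mul_sum, ← sum_sub_distrib, ← nsmul_eq_mul, ← card_univ, ← sum_const,
      ← sum_sub_distrib]
    exact sum_congr rfl fun v _ ↦ by ring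
  have hcard : (0 : ℤ) ≤ Fintype.card V - 2 := by
    have := Fintype.one_lt_card (α := V)
    omega
  rw [sigmaT_eq_card_mul_sum_sq_sub_sq_sum, hcorrection, hsum]
  linarith [mul_le_mul_of_nonneg_left (sum_sq_degree_add_le_irr_of_isTree hT r) hcard]

lemma exists_adj_degree_eq_one_and_one_lt_of_isTree (hT : G.IsTree) {r : V} (hr : 1 < G.degree r) :
    ∃ u v, G.Adj u v ∧ G.degree u = 1 ∧ 1 < G.degree v := by
  obtain ⟨w, hrw⟩ := (G.degree_pos_iff_exists_adj r).1 (by omega)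
  have : Nontrivial V := ⟨r, w, hrw.ne⟩
  obtain ⟨leaf, hleaf⟩ := hT.exists_vert_degree_one_of_nontrivial
  obtain ⟨walk⟩ := hT.connected leaf r
  obtain ⟨⟨⟨u, v⟩, huv⟩, -, hu, hv⟩ :=
    walk.exists_boundary_dart {x | G.degree x = 1} hleaf hr.ne'
  have hv_pos : 0 < G.degree v := (G.degree_pos_iff_exists_adj v).2 ⟨u, huv.symm⟩
  exact ⟨u, v, huv, hu, lt_of_le_of_ne hv_pos (Ne.symm hv)⟩

end Irregularity

/-- For every tree `T` of order `n` with `Δ(T) ≥ 3`, `σ_t(T) < (n-2) · σ(T)`. -/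
theorem stmt2 {V : Type*} [Fintype V] (G : SimpleGraph V) (hT : G.IsTree)
    (hΔ : 3 ≤ G.maxDegree) :
    sigmaT G < ((Fintype.card V : ℤ) - 2) * sigmaE G := by
  have := hT.connected.nonempty
  obtain ⟨r, hr⟩ := G.exists_maximal_degree_vertex
  obtain ⟨u, v, huv, hu, hv⟩ :=
    exists_adj_degree_eq_one_and_one_lt_of_isTree hT (r := r) (by omega)
  have : Nontrivial V := ⟨u, v, huv.ne⟩
  have hcard : (0 : ℤ) < Fintype.card V - 2 := by
    have := G.degree_lt_card_verts r
    omega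
  have hbound := sigmaT_add_le_mul_irr_of_isTree hT r
  have hmax (w : V) : G.degree w ≤ G.degree r := hr ▸ G.degree_le_maxDegree w
  have hterm (w : V) : 0 ≤ ((G.degree w : ℤ) - 1) * (G.degree r - G.degree w) := by
    have hpos := hT.connected.preconnected.degree_pos_of_nontrivial w
    exact mul_nonneg (by omega) (by have := hmax w; omega)
  rcases (hmax v).lt_or_eq with hlt | heq
  · have hcorrection : 0 < ∑ w, ((G.degree w : ℤ) - 1) * (G.degree r - G.degree w) :=
      sum_pos' (fun w _ ↦ hterm w) ⟨v, mem_univ v, mul_pos (by omega) (by omega)⟩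
    linarith [mul_le_mul_of_nonneg_left (irr_le_sigmaE G) hcard.le]
  · have hirr : irr G < sigmaE G := irr_lt_sigmaE_of_adj huv (by omega)
    linarith [mul_lt_mul_of_pos_left hirr hcard,
      sum_nonneg fun w (_ : w ∈ univ) ↦ hterm w]
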